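/- Let G=(V,E) be a finite directed graph with a weight function wt: E → Σ into a unital quantale Σ such that wt(e) ≤ 1̄ for every edge e (i.e., the semiring has trivial closure: s★ = 1̄ for all s). Then for all u,v ∈ V the distance is realized by acyclic paths: d(u,v) = ⨆ ⊗(P) over the (finitely many) simple paths P: u⇝v, i.e., paths in which no node repeats. -/

import Mathlib

/-- `IsPathList E u v p`: the list `p` is the node sequence of a path from `u` to `v`
in the directed graph with edge relation `E`. Nodes may repeat; a single node `u`
(i.e. `p = [u]`) is a path of length 0 from `u` to `u`. The path is simple iff
no node repeats, i.e. `p.Nodup`. -/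
def IsPathList {V : Type*} (E : V → V → Prop) (u v : V) (p : List V) : Prop :=
  p.head? = some u ∧ p.getLast? = some v ∧ p.Chain' E

/-- The weight `⊗(P)` of the path with node sequence `p`: the ordered product of the
weights of its edges; the empty product (length-0 path) is `1̄`. -/
def pathWeight {V Q : Type*} [Monoid Q] (wt : V → V → Q) (p : List V) : Q :=
  ((p.zip p.tail).map fun e => wt e.1 e.2).prod

/-- The distance `d(u,v) = ⨆_{P : u ⇝ v} ⊗(P)`, equal to `0̄ = ⊥` if no path exists. -/
noncomputable def pathDist {V Q : Type*} [Monoid Q] [CompleteLattice Q]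
    (E : V → V → Prop) (wt : V → V → Q) (u v : V) : Q :=
  ⨆ p : {p : List V // IsPathList E u v p}, pathWeight wt p.val

/-!
If a node `x` occurs twice on a path, the path splits at these occurrences as `P₁ C P₂` with `C` a
cycle through `x`. A product of weights `≤ 1` is `≤ 1`, so monotonicity of multiplication gives
`⊗(P₁ C P₂) ≤ ⊗(P₁) ⊗ 1 ⊗ ⊗(P₂) = ⊗(P₁ P₂)`. Removing cycles shortens the path, hence ends in a
simple path whose weight dominates that of the given one.
-/

theorem exists_eq_append_cons_append_cons_of_not_nodup {α : Type*} {l : List α}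
    (h : ¬ l.Nodup) : ∃ x s m t, l = s ++ x :: (m ++ x :: t) := by
  obtain ⟨x, hx⟩ := List.exists_duplicate_iff_not_nodup.mpr h
  obtain ⟨l₁, l₂, rfl, hx₁, hx₂⟩ := List.cons_sublist_iff.mp (List.duplicate_iff_sublist.mp hx)
  obtain ⟨s, m₁, rfl⟩ := List.append_of_mem hx₁
  obtain ⟨m₂, t, rfl⟩ := List.append_of_mem (List.singleton_sublist.mp hx₂)
  exact ⟨x, s, m₁ ++ m₂, t, by simp only [List.append_assoc, List.cons_append]⟩

section Monoid

variable {V Q : Type*} [Monoid Q] (wt : V → V → Q)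

theorem pathWeight_singleton (a : V) : pathWeight wt [a] = 1 := rfl

theorem pathWeight_cons_cons (a b : V) (p : List V) :
    pathWeight wt (a :: b :: p) = wt a b * pathWeight wt (b :: p) := by
  simp [pathWeight]

theorem pathWeight_append_cons (s : List V) (x : V) (t : List V) :
    pathWeight wt (s ++ x :: t) = pathWeight wt (s ++ [x]) * pathWeight wt (x :: t) := by
  induction s with
  | nil => simp only [List.nil_append, pathWeight_singleton, one_mul]
  | cons a s ih =>
    cases s with
    | nil =>
      simp only [List.cons_append, List.nil_append, pathWeight_cons_cons, pathWeight_singleton,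
        mul_one]
    | cons b s =>
      simp only [List.cons_append, pathWeight_cons_cons, mul_assoc] at ih ⊢
      rw [ih]

end Monoid

section OrderedMonoid

variable {V Q : Type*} [Monoid Q] [Preorder Q] [MulLeftMono Q]
  {E : V → V → Prop} {wt : V → V → Q}

theorem pathWeight_le_one (hwt : ∀ a b, E a b → wt a b ≤ 1) {p : List V} (hp : p.IsChain E) :
    pathWeight wt p ≤ 1 := by
  induction hp with
  | nil => exact le_rfl
  | singleton a => exact le_rfl
  | cons_cons hab _ ih =>
    rw [pathWeight_cons_cons]
    exact mul_le_one' (hwt _ _ hab) ih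

theorem pathWeight_le_pathWeight_remove_cycle [MulRightMono Q] (s : List V) {x : V} {m : List V}
    (t : List V) (hcycle : pathWeight wt (x :: (m ++ [x])) ≤ 1) :
    pathWeight wt (s ++ x :: (m ++ x :: t)) ≤ pathWeight wt (s ++ x :: t) :=
  calc pathWeight wt (s ++ x :: (m ++ x :: t))
      = pathWeight wt (s ++ [x]) * (pathWeight wt (x :: (m ++ [x])) * pathWeight wt (x :: t)) := by
        rw [pathWeight_append_cons, ← List.cons_append, pathWeight_append_cons wt (x :: m),
          List.cons_append]
    _ ≤ pathWeight wt (s ++ [x]) * pathWeight wt (x :: t) := by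
        gcongr
        exact mul_le_of_le_one_left' hcycle
    _ = pathWeight wt (s ++ x :: t) := (pathWeight_append_cons wt s x t).symm

end OrderedMonoid

namespace IsPathList

variable {V : Type*} {E : V → V → Prop} {u v : V}

theorem isChain_cycle {s : List V} {x : V} {m t : List V}
    (h : IsPathList E u v (s ++ x :: (m ++ x :: t))) : (x :: (m ++ [x])).IsChain E :=
  have hsuffix : (x :: (m ++ x :: t)).IsChain E := h.2.2.right_of_append
  (List.isChain_split (l₁ := x :: m) |>.mp hsuffix).1

theorem remove_cycle {s : List V} {x : V} {m t : List V}
    (h : IsPathList E u v (s ++ x :: (m ++ x :: t))) : IsPathList E u v (s ++ x :: t) := by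
  obtain ⟨hhead, hlast, hchain⟩ := h
  refine ⟨?_, ?_, ?_⟩
  · cases s <;> exact hhead
  · rwa [← List.cons_append, ← List.append_assoc, List.getLast?_append_cons,
      ← List.getLast?_append_cons s] at hlast
  · obtain ⟨hs, hsuffix⟩ := List.isChain_split.mp hchain
    exact List.isChain_split.mpr ⟨hs, hsuffix.right_of_append (l₁ := x :: m)⟩

theorem exists_nodup_pathWeight_le {Q : Type*} [Monoid Q] [Preorder Q] [MulLeftMono Q]
    [MulRightMono Q] {wt : V → V → Q} (hwt : ∀ a b, E a b → wt a b ≤ 1) {p : List V}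
    (hp : IsPathList E u v p) :
    ∃ q, IsPathList E u v q ∧ q.Nodup ∧ pathWeight wt p ≤ pathWeight wt q := by
  by_cases hnodup : p.Nodup
  · exact ⟨p, hp, hnodup, le_rfl⟩
  · obtain ⟨x, s, m, t, rfl⟩ := exists_eq_append_cons_append_cons_of_not_nodup hnodup
    obtain ⟨q, hq, hqnodup, hle⟩ := exists_nodup_pathWeight_le hwt hp.remove_cycle
    have hcycle := pathWeight_le_one hwt hp.isChain_cycle
    exact ⟨q, hq, hqnodup, (pathWeight_le_pathWeight_remove_cycle s t hcycle).trans hle⟩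
termination_by p.length
decreasing_by
  subst_vars
  simp +arith

end IsPathList

theorem stmt8_general {V Q : Type*} [Monoid Q] [CompleteLattice Q] [MulLeftMono Q]
    [MulRightMono Q] (E : V → V → Prop) (wt : V → V → Q)
    (hwt : ∀ a b : V, E a b → wt a b ≤ 1) (u v : V) :
    pathDist E wt u v =
      ⨆ p : {p : List V // IsPathList E u v p ∧ p.Nodup}, pathWeight wt p.val := by
  apply le_antisymm
  · refine iSup_mono' fun ⟨p, hp⟩ => ?_
    obtain ⟨q, hq, hqnodup, hle⟩ := hp.exists_nodup_pathWeight_le hwt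
    exact ⟨⟨q, hq, hqnodup⟩, hle⟩
  · exact iSup_mono' fun ⟨p, hp, _⟩ => ⟨⟨p, hp⟩, le_rfl⟩

/-- in a unital quantale, if `wt(e) ≤ 1̄` for every edge `e` (trivial
closure), then the distance is realized by acyclic paths:
`d(u,v)` equals the join of `⊗(P)` over the simple paths `P : u ⇝ v`. -/
theorem stmt8 {V Q : Type*} [Finite V] [Monoid Q] [CompleteLattice Q] [IsQuantale Q]
    (E : V → V → Prop) (wt : V → V → Q)
    (hwt : ∀ a b : V, E a b → wt a b ≤ 1) (u v : V) :
    pathDist E wt u v =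
      ⨆ p : {p : List V // IsPathList E u v p ∧ p.Nodup}, pathWeight wt p.val :=
  stmt8_general E wt hwt u v
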